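/- Suppose rank(X_0) = r = r_A (exact-parametrization), the largest eigenvalue of A is σ_1(A) = 1, and set κ = 1/σ_r(A). Run ScaledGD with η = 1/2. If σ_r(X_0X_0ᵀ) ≥ σ_r(A)/3 and ‖X_0X_0ᵀ − A‖_F ≤ 2/(3κ²), then for every t ≥ 0, ‖X_{t+1}X_{t+1}ᵀ − A‖_F ≤ (4/(3κ²)) · 2^{−2^{t+1}} (quadratic convergence to the global optimum of min_X ‖XXᵀ − A‖_F²). -/

import Mathlib

open Matrix BigOperators

/-- `kthEig M k` is the `k`-th largest eigenvalue of a real symmetric matrix `M`,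
via the Courant–Fischer max-min characterization. -/
noncomputable def kthEig {n : ℕ} (M : Matrix (Fin n) (Fin n) ℝ) (k : ℕ) : ℝ :=
  sSup {c : ℝ | ∃ V : Submodule ℝ (Fin n → ℝ), Module.finrank ℝ V = k ∧
    ∀ x ∈ V, c * (∑ i, x i ^ 2) ≤ ∑ i, x i * (M *ᵥ x) i}

/-- The Frobenius norm of a real matrix. -/
noncomputable def frobNorm {m n : ℕ} (M : Matrix (Fin m) (Fin n) ℝ) : ℝ :=
  Real.sqrt (∑ i, ∑ j, (M i j) ^ 2)

/-!
Along the iteration `X_t = Q Φ_t`, so the problem reduces to square factors `Φ` of a positive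
definite `S`. There the step with `η = 1/2` is `Φ ↦ (Φ + S Φ⁻ᵀ) / 2`, a matrix analogue of Newton's
iteration for the square root: the new product is `P' = S + ¼ E P⁻¹ E`, where `P = Φ Φᵀ` and
`E = P - S`. Hence `P' ≥ S` in the Loewner order, and `‖P' - S‖ ≤ ‖E‖² / (4c)` whenever `c • 1 ≤ P`.
One can take `c = σ_r / 3` at every step: initially by Weyl's inequality, because `‖E‖ ≤ 2 σ_r / 3`,
and later because `P ≥ S`.
-/

section DotProduct

variable {m n k R : Type*} [Fintype n]

lemma dotProduct_self_nonneg (y : n → ℝ) : 0 ≤ y ⬝ᵥ y := by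
  simpa only [star_trivial] using dotProduct_star_self_nonneg y

lemma dotProduct_mulVec_mul_mul_transpose [CommSemiring R] [Fintype m] (Q : Matrix m n R)
    (S : Matrix n n R) (x : m → R) :
    x ⬝ᵥ (Q * S * Qᵀ) *ᵥ x = (Qᵀ *ᵥ x) ⬝ᵥ S *ᵥ (Qᵀ *ᵥ x) := by
  rw [← mulVec_mulVec, ← mulVec_mulVec, dotProduct_mulVec, mulVec_transpose]

lemma mul_mul_transpose_sub [CommRing R] [Fintype k] (Q : Matrix m n R) (S : Matrix n n R)
    (Φ : Matrix n k R) : Q * Φ * (Q * Φ)ᵀ - Q * S * Qᵀ = Q * (Φ * Φᵀ - S) * Qᵀ := by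
  simp only [transpose_mul, Matrix.mul_sub, Matrix.sub_mul, Matrix.mul_assoc]

end DotProduct

section Isometry

variable {m n l R : Type*} [Fintype m] [Fintype n] [DecidableEq n] [CommSemiring R]

lemma transpose_mul_mul_cancel {Q : Matrix m n R} (hQ : Qᵀ * Q = 1) (M : Matrix n l R) :
    Qᵀ * (Q * M) = M := by
  rw [← Matrix.mul_assoc, hQ, Matrix.one_mul]

lemma transpose_mulVec_mulVec_of_isometry {Q : Matrix m n R} (hQ : Qᵀ * Q = 1) (y : n → R) :
    Qᵀ *ᵥ (Q *ᵥ y) = y := by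
  rw [mulVec_mulVec, hQ, one_mulVec]

lemma mulVec_injective_of_isometry {Q : Matrix m n R} (hQ : Qᵀ * Q = 1) :
    Function.Injective (Q *ᵥ ·) :=
  Function.LeftInverse.injective (transpose_mulVec_mulVec_of_isometry hQ)

lemma dotProduct_mulVec_mulVec_of_isometry {Q : Matrix m n R} (hQ : Qᵀ * Q = 1) (x y : n → R) :
    (Q *ᵥ x) ⬝ᵥ (Q *ᵥ y) = x ⬝ᵥ y := by
  rw [dotProduct_mulVec, ← mulVec_transpose, transpose_mulVec_mulVec_of_isometry hQ]

lemma dotProduct_transpose_mulVec_self_le {Q : Matrix m n ℝ} (hQ : Qᵀ * Q = 1) (x : m → ℝ) :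
    (Qᵀ *ᵥ x) ⬝ᵥ (Qᵀ *ᵥ x) ≤ x ⬝ᵥ x := by
  set y := Qᵀ *ᵥ x with hy
  have hxy : x ⬝ᵥ (Q *ᵥ y) = y ⬝ᵥ y := by rw [dotProduct_mulVec, ← mulVec_transpose, hy]
  have hres : 0 ≤ (x - Q *ᵥ y) ⬝ᵥ (x - Q *ᵥ y) := dotProduct_self_nonneg _
  rw [sub_dotProduct, dotProduct_sub, dotProduct_sub, dotProduct_comm (Q *ᵥ y) x, hxy,
    dotProduct_mulVec_mulVec_of_isometry hQ] at hres
  linarith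

end Isometry

section Frobenius

open scoped Matrix.Norms.Frobenius

variable {m n k : Type*} [Fintype m] [Fintype n] [Fintype k]

lemma frobNorm_eq_norm {m n : ℕ} (M : Matrix (Fin m) (Fin n) ℝ) : frobNorm M = ‖M‖ := by
  rw [frobNorm, frobenius_norm_def, Real.sqrt_eq_rpow]
  simp only [Real.norm_eq_abs, Real.rpow_two, sq_abs]

lemma frobenius_norm_sq (M : Matrix m n ℝ) : ‖M‖ ^ 2 = (Mᵀ * M).trace := by
  rw [frobenius_norm_def, ← Real.sqrt_eq_rpow, Real.sq_sqrt (by positivity), Finset.sum_comm]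
  simp only [Real.norm_eq_abs, Real.rpow_two, sq_abs, trace, diag, mul_apply, transpose_apply,
    ← sq]

lemma frobenius_norm_isometry_mul [DecidableEq n] {Q : Matrix m n ℝ} (hQ : Qᵀ * Q = 1)
    (N : Matrix n k ℝ) : ‖Q * N‖ = ‖N‖ := by
  rw [← sq_eq_sq₀ (norm_nonneg _) (norm_nonneg _), frobenius_norm_sq, frobenius_norm_sq,
    transpose_mul, Matrix.mul_assoc, transpose_mul_mul_cancel hQ]

lemma frobenius_norm_mul_mul_transpose [DecidableEq n] {Q : Matrix m n ℝ} (hQ : Qᵀ * Q = 1)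
    (M : Matrix n n ℝ) : ‖Q * M * Qᵀ‖ = ‖M‖ := by
  rw [Matrix.mul_assoc, frobenius_norm_isometry_mul hQ, ← frobenius_norm_transpose, transpose_mul,
    transpose_transpose, frobenius_norm_isometry_mul hQ, frobenius_norm_transpose]

lemma abs_dotProduct_mulVec_self_le (M : Matrix n n ℝ) (y : n → ℝ) :
    |y ⬝ᵥ M *ᵥ y| ≤ ‖M‖ * (y ⬝ᵥ y) := by
  have hy : ‖WithLp.toLp 2 y‖ * ‖WithLp.toLp 2 y‖ = y ⬝ᵥ y := by
    rw [← sq, EuclideanSpace.real_norm_sq_eq]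
    simp only [dotProduct, sq]
  calc |y ⬝ᵥ M *ᵥ y|
      = ‖replicateRow Unit y * (M * replicateCol Unit y)‖ := by
        rw [← replicateCol_mulVec, frobenius_norm_def]
        simp only [Finset.univ_unique, Finset.sum_singleton, replicateRow_mul_replicateCol_apply,
          ← Real.sqrt_eq_rpow, Real.rpow_two, Real.norm_eq_abs, Real.sqrt_sq (abs_nonneg _)]
    _ ≤ ‖replicateRow Unit y‖ * (‖M‖ * ‖replicateCol Unit y‖) :=
        (frobenius_norm_mul _ _).trans <|
          mul_le_mul_of_nonneg_left (frobenius_norm_mul _ _) (norm_nonneg _)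
    _ = ‖M‖ * (y ⬝ᵥ y) := by
        rw [frobenius_norm_replicateRow, frobenius_norm_replicateCol, mul_left_comm, hy]

lemma frobNorm_isometry_mul_residual {m n k : ℕ} {Q : Matrix (Fin m) (Fin n) ℝ}
    (hQ : Qᵀ * Q = 1) (S : Matrix (Fin n) (Fin n) ℝ) (Φ : Matrix (Fin n) (Fin k) ℝ) :
    frobNorm (Q * Φ * (Q * Φ)ᵀ - Q * S * Qᵀ) = ‖Φ * Φᵀ - S‖ := by
  rw [mul_mul_transpose_sub, frobNorm_eq_norm, frobenius_norm_mul_mul_transpose hQ]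

end Frobenius

section LoewnerOrder

open scoped MatrixOrder Matrix.Norms.Frobenius

variable {n k : Type*} [DecidableEq n]

lemma posDef_of_smul_one_le {P : Matrix n n ℝ} {c : ℝ} (hc : 0 < c) (hP : c • 1 ≤ P) :
    P.PosDef := by
  have := (PosDef.one (R := ℝ) (n := n)).smul hc |>.add_posSemidef (Matrix.le_iff.1 hP)
  rwa [add_sub_cancel] at this

lemma exists_pos_smul_one_le [Finite n] {S : Matrix n n ℝ} (hS : S.PosDef) :
    ∃ c : ℝ, 0 < c ∧ c • 1 ≤ S := by
  cases nonempty_fintype n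
  rcases subsingleton_or_nontrivial (Matrix n n ℝ) with _ | _
  · exact ⟨1, one_pos, (Subsingleton.elim _ _).le⟩
  have hS' := isStrictlyPositive_iff_posDef.2 hS
  obtain ⟨c, hc, hcS⟩ :=
    (CFC.exists_pos_algebraMap_le_iff hS'.isSelfAdjoint).2 fun x hx => hS'.spectrum_pos hx
  exact ⟨c, hc, by rwa [Algebra.algebraMap_eq_smul_one] at hcS⟩

variable [Fintype n]

lemma smul_one_le_iff {M : Matrix n n ℝ} (hM : M.IsHermitian) {c : ℝ} :
    c • 1 ≤ M ↔ ∀ y, c * (y ⬝ᵥ y) ≤ y ⬝ᵥ M *ᵥ y := by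
  have hsub : (M - c • 1).IsHermitian := hM.sub (isHermitian_one.smul (IsSelfAdjoint.all c))
  rw [Matrix.le_iff, posSemidef_iff_dotProduct_mulVec, and_iff_right hsub]
  simp only [star_trivial, sub_mulVec, smul_mulVec, one_mulVec, dotProduct_sub, dotProduct_smul,
    smul_eq_mul, sub_nonneg]

lemma neg_norm_smul_one_le {M : Matrix n n ℝ} (hM : M.IsHermitian) : (-‖M‖) • 1 ≤ M :=
  (smul_one_le_iff hM).2 fun y => by
    simpa only [neg_mul] using neg_le_of_abs_le (abs_dotProduct_mulVec_self_le M y)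

lemma sub_norm_smul_one_le {S P : Matrix n n ℝ} {c : ℝ} (hPS : (P - S).IsHermitian)
    (hS : c • 1 ≤ S) : (c - ‖P - S‖) • 1 ≤ P := by
  have h := add_le_add hS (neg_norm_smul_one_le hPS)
  rwa [← add_smul, ← sub_eq_add_neg, add_sub_cancel] at h

lemma isUnit_det_of_smul_one_le {Φ : Matrix n n ℝ} {c : ℝ} (hc : 0 < c) (hΦ : c • 1 ≤ Φ * Φᵀ) :
    IsUnit Φ.det := by
  have h := (isUnit_iff_isUnit_det _).1 (posDef_of_smul_one_le hc hΦ).isUnit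
  rw [det_mul] at h
  exact isUnit_of_mul_isUnit_left h

lemma mul_norm_le_norm_mul [Fintype k] {P : Matrix n n ℝ} {c : ℝ} (hc : 0 ≤ c) (hP : c • 1 ≤ P)
    (F : Matrix n k ℝ) : c * ‖F‖ ≤ ‖P * F‖ := by
  obtain ⟨N, rfl⟩ : ∃ N, P = c • 1 + N := ⟨P - c • 1, (add_sub_cancel _ _).symm⟩
  have hN : N.PosSemidef := by simpa only [Matrix.le_iff, add_sub_cancel_left] using hP
  have htrace : 0 ≤ (Fᵀ * N * F).trace := by
    simpa only [conjTranspose_eq_transpose_of_trivial] using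
      (hN.conjTranspose_mul_mul_same F).trace_nonneg
  have hNt : Nᵀ = N := by simpa only [conjTranspose_eq_transpose_of_trivial] using hN.isHermitian.eq
  have hexpand : ‖(c • 1 + N) * F‖ ^ 2
      = (c * ‖F‖) ^ 2 + 2 * c * (Fᵀ * N * F).trace + ‖N * F‖ ^ 2 := by
    simp only [mul_pow, frobenius_norm_sq, transpose_mul, transpose_add, transpose_smul,
      hNt, Matrix.add_mul, Matrix.mul_add, Matrix.smul_mul, Matrix.mul_smul,
      Matrix.one_mul, Matrix.mul_assoc, trace_add, trace_smul, smul_eq_mul]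
    ring
  refine le_of_sq_le_sq ?_ (norm_nonneg _)
  rw [hexpand]
  nlinarith [sq_nonneg ‖N * F‖, mul_nonneg hc htrace]

end LoewnerOrder

section ScaledGD

open scoped MatrixOrder Matrix.Norms.Frobenius

variable {m n k : Type*} [Fintype m] [Fintype n] [Fintype k] [DecidableEq n] [DecidableEq k]

/-- One iteration of ScaledGD with step size `η` for the problem of minimizing `‖X Xᵀ - A‖²`. -/
noncomputable def scaledGDStep (η : ℝ) (A : Matrix m m ℝ) (X : Matrix m n ℝ) : Matrix m n ℝ :=
  X - η • ((X * Xᵀ - A) * X * (Xᵀ * X)⁻¹)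

lemma scaledGDStep_isometry_mul {Q : Matrix m n ℝ} (hQ : Qᵀ * Q = 1) (η : ℝ)
    (S : Matrix n n ℝ) (Φ : Matrix n k ℝ) :
    scaledGDStep η (Q * S * Qᵀ) (Q * Φ) = Q * scaledGDStep η S Φ := by
  have hGram : (Q * Φ)ᵀ * (Q * Φ) = Φᵀ * Φ := by
    rw [transpose_mul, Matrix.mul_assoc, transpose_mul_mul_cancel hQ]
  rw [scaledGDStep, scaledGDStep, hGram, mul_mul_transpose_sub, Matrix.mul_sub Q Φ, Matrix.mul_smul]
  simp only [Matrix.mul_assoc, transpose_mul_mul_cancel hQ]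

lemma scaledGDStep_iterate_isometry_mul {Q : Matrix m n ℝ} (hQ : Qᵀ * Q = 1) (η : ℝ)
    (S : Matrix n n ℝ) (Φ : Matrix n k ℝ) (t : ℕ) :
    (scaledGDStep η (Q * S * Qᵀ))^[t] (Q * Φ) = Q * (scaledGDStep η S)^[t] Φ :=
  have hcomm : Function.Semiconj (Q * ·) (scaledGDStep (n := k) η S)
      (scaledGDStep η (Q * S * Qᵀ)) := fun Φ => (scaledGDStep_isometry_mul hQ η S Φ).symm
  (hcomm.iterate_right t Φ).symm

lemma scaledGDStep_half_mul_transpose {S Φ : Matrix n n ℝ} (hS : Sᵀ = S) (hΦ : IsUnit Φ.det) :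
    scaledGDStep (1 / 2) S Φ * (scaledGDStep (1 / 2) S Φ)ᵀ
      = S + (1 / 4 : ℝ) • ((Φ * Φᵀ - S) * (Φ * Φᵀ)⁻¹ * (Φ * Φᵀ - S)) := by
  have hΦt : IsUnit Φᵀ.det := by rwa [det_transpose]
  have hstep : scaledGDStep (1 / 2) S Φ = (1 / 2 : ℝ) • (Φ + S * Φᵀ⁻¹) := by
    have hscaled : (Φ * Φᵀ - S) * Φ * (Φᵀ * Φ)⁻¹ = Φ - S * Φᵀ⁻¹ := by
      rw [Matrix.mul_inv_rev, Matrix.mul_assoc, mul_nonsing_inv_cancel_left _ _ hΦ, Matrix.sub_mul,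
        mul_nonsing_inv_cancel_right _ _ hΦt]
    rw [scaledGDStep, hscaled]
    module
  have htranspose : (Φ + S * Φᵀ⁻¹)ᵀ = Φᵀ + Φ⁻¹ * S := by
    rw [transpose_add, transpose_mul, transpose_nonsing_inv, transpose_transpose, hS]
  rw [hstep, transpose_smul, htranspose, Matrix.mul_inv_rev]
  simp only [Matrix.smul_mul, Matrix.mul_smul, Matrix.add_mul, Matrix.mul_add, Matrix.sub_mul,
    Matrix.mul_sub, Matrix.mul_assoc, mul_nonsing_inv_cancel_left _ _ hΦ,
    nonsing_inv_mul_cancel_left _ _ hΦ, mul_nonsing_inv_cancel_left _ _ hΦt,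
    nonsing_inv_mul _ hΦt, Matrix.mul_one]
  module

lemma le_scaledGDStep_half_mul_transpose {S Φ : Matrix n n ℝ} (hS : Sᵀ = S)
    (hΦ : IsUnit Φ.det) :
    S ≤ scaledGDStep (1 / 2) S Φ * (scaledGDStep (1 / 2) S Φ)ᵀ := by
  have hGram : (Φ * Φᵀ)⁻¹.PosSemidef := by
    simpa only [conjTranspose_eq_transpose_of_trivial] using
      (posSemidef_self_mul_conjTranspose Φ).inv
  have hsandwich := hGram.conjTranspose_mul_mul_same (Φ * Φᵀ - S)
  rw [conjTranspose_eq_transpose_of_trivial, transpose_sub, transpose_mul, transpose_transpose, hS]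
    at hsandwich
  rw [scaledGDStep_half_mul_transpose hS hΦ, Matrix.le_iff, add_sub_cancel_left]
  exact hsandwich.smul (by norm_num)

lemma norm_scaledGDStep_half_sub_le {S Φ : Matrix n n ℝ} {c : ℝ} (hS : Sᵀ = S) (hc : 0 < c)
    (hΦ : c • 1 ≤ Φ * Φᵀ) :
    ‖scaledGDStep (1 / 2) S Φ * (scaledGDStep (1 / 2) S Φ)ᵀ - S‖
      ≤ ‖Φ * Φᵀ - S‖ ^ 2 / (4 * c) := by
  have hdet := isUnit_det_of_smul_one_le hc hΦ
  set P := Φ * Φᵀ with hP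
  have hPdet : IsUnit P.det := by
    rw [hP, det_mul, det_transpose]
    exact hdet.mul hdet
  have hinv : c * ‖P⁻¹ * (P - S)‖ ≤ ‖P - S‖ := by
    simpa only [mul_nonsing_inv_cancel_left _ _ hPdet] using
      mul_norm_le_norm_mul hc.le hΦ (P⁻¹ * (P - S))
  rw [scaledGDStep_half_mul_transpose hS hdet, add_sub_cancel_left, norm_smul,
    Matrix.mul_assoc, Real.norm_of_nonneg (by norm_num)]
  calc 1 / 4 * ‖(P - S) * (P⁻¹ * (P - S))‖
      ≤ 1 / 4 * (‖P - S‖ * ‖P⁻¹ * (P - S)‖) := by gcongr; exact frobenius_norm_mul _ _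
    _ ≤ 1 / 4 * (‖P - S‖ * (‖P - S‖ / c)) := by gcongr; rwa [le_div_iff₀' hc]
    _ = ‖P - S‖ ^ 2 / (4 * c) := by ring

theorem norm_scaledGDStep_half_iterate_sub_le {S Φ : Matrix n n ℝ} {s δ : ℝ} (hS : Sᵀ = S)
    (hs : 0 < s) (hsS : s • 1 ≤ S) (hδ : δ ≤ 4 / 3 * s) (hΦ : ‖Φ * Φᵀ - S‖ ≤ δ / 2) (t : ℕ) :
    ‖(scaledGDStep (1 / 2) S)^[t] Φ * ((scaledGDStep (1 / 2) S)^[t] Φ)ᵀ - S‖ ≤ δ / 2 ^ 2 ^ t := by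
  suffices h : (s / 3) • 1 ≤ (scaledGDStep (1 / 2) S)^[t] Φ * ((scaledGDStep (1 / 2) S)^[t] Φ)ᵀ ∧
      ‖(scaledGDStep (1 / 2) S)^[t] Φ * ((scaledGDStep (1 / 2) S)^[t] Φ)ᵀ - S‖ ≤ δ / 2 ^ 2 ^ t from
    h.2
  induction t with
  | zero =>
    have hherm : (Φ * Φᵀ - S).IsHermitian := by
      rw [IsHermitian, conjTranspose_eq_transpose_of_trivial, transpose_sub, transpose_mul,
        transpose_transpose, hS]
    have hs3 : s / 3 ≤ s - ‖Φ * Φᵀ - S‖ := by linarith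
    exact ⟨(smul_le_smul_of_nonneg_right hs3 zero_le_one).trans (sub_norm_smul_one_le hherm hsS),
      by simpa using hΦ⟩
  | succ t ih =>
    obtain ⟨hlower, herr⟩ := ih
    rw [Function.iterate_succ_apply']
    set Ψ := (scaledGDStep (1 / 2) S)^[t] Φ
    have hs3 : 0 < s / 3 := by positivity
    refine ⟨?_, (norm_scaledGDStep_half_sub_le hS hs3 hlower).trans ?_⟩
    · exact ((smul_le_smul_of_nonneg_right (by linarith) zero_le_one).trans hsS).trans <|
        le_scaledGDStep_half_mul_transpose hS (isUnit_det_of_smul_one_le hs3 hlower)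
    · have hδ0 : 0 ≤ δ := by linarith [norm_nonneg (Φ * Φᵀ - S)]
      calc ‖Ψ * Ψᵀ - S‖ ^ 2 / (4 * (s / 3))
          ≤ (δ / 2 ^ 2 ^ t) ^ 2 / (4 / 3 * s) := by
            rw [show 4 * (s / 3) = 4 / 3 * s by ring]
            gcongr
        _ = δ / (4 / 3 * s) * (δ / 2 ^ 2 ^ (t + 1)) := by
            rw [div_pow, ← pow_mul, ← pow_succ]
            ring
        _ ≤ δ / 2 ^ 2 ^ (t + 1) :=
            mul_le_of_le_one_left (by positivity) ((div_le_one (by positivity)).2 hδ)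

end ScaledGD

lemma exists_submodule_le_finrank_eq {K E : Type*} [DivisionRing K] [AddCommGroup E] [Module K E]
    {W : Submodule K E} {k : ℕ} (hk : k ≤ Module.finrank K W) :
    ∃ V ≤ W, Module.finrank K V = k := by
  obtain ⟨v, hv⟩ := exists_linearIndependent_of_le_finrank hk
  have hvE : LinearIndependent K (fun i => (v i : E)) := hv.map' W.subtype W.ker_subtype
  refine ⟨Submodule.span K (Set.range fun i => (v i : E)), ?_, ?_⟩
  · rw [Submodule.span_le]
    rintro _ ⟨i, rfl⟩
    exact (v i).2
  · rw [finrank_span_eq_card hvE, Fintype.card_fin]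

lemma finrank_map_eq_of_injOn {K E F : Type*} [DivisionRing K] [AddCommGroup E] [Module K E]
    [AddCommGroup F] [Module K F] {f : E →ₗ[K] F} {V : Submodule K E} (hf : Set.InjOn f V) :
    Module.finrank K (V.map f) = Module.finrank K V := by
  rw [← LinearMap.range_domRestrict]
  exact LinearMap.finrank_range_of_inj (Set.injOn_iff_injective.1 hf)

section RayleighLowerBounds

open scoped MatrixOrder Matrix.Norms.Frobenius

variable {m n : Type*} [Fintype m] [Fintype n]

/-- The constants bounding the Rayleigh quotient of `M` from below on some `k`-dimensional
subspace. By the Courant–Fischer principle their supremum is the `k`-th largest eigenvalue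
of a symmetric `M`. -/
def rayleighLowerBounds (M : Matrix n n ℝ) (k : ℕ) : Set ℝ :=
  {c | ∃ V : Submodule ℝ (n → ℝ), Module.finrank ℝ V = k ∧ ∀ x ∈ V, c * (x ⬝ᵥ x) ≤ x ⬝ᵥ M *ᵥ x}

lemma kthEig_eq_sSup_rayleighLowerBounds {n : ℕ} (M : Matrix (Fin n) (Fin n) ℝ) (k : ℕ) :
    kthEig M k = sSup (rayleighLowerBounds M k) := by
  simp only [kthEig, rayleighLowerBounds, dotProduct, sq]

lemma rayleighLowerBounds_anti (M : Matrix n n ℝ) : Antitone (rayleighLowerBounds M) := by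
  rintro k _ hkl c ⟨W, rfl, hW⟩
  obtain ⟨V, hVW, hV⟩ := exists_submodule_le_finrank_eq hkl
  exact ⟨V, hV, fun x hx => hW x (hVW hx)⟩

lemma bddAbove_rayleighLowerBounds (M : Matrix n n ℝ) {k : ℕ} (hk : 0 < k) :
    BddAbove (rayleighLowerBounds M k) := by
  refine ⟨‖M‖, ?_⟩
  rintro c ⟨V, rfl, hV⟩
  obtain ⟨⟨x, hx⟩, hx0⟩ := Module.finrank_pos_iff_exists_ne_zero.1 hk
  have hxx : 0 < x ⬝ᵥ x := (dotProduct_self_nonneg x).lt_of_ne' fun h =>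
    hx0 (Subtype.ext (dotProduct_self_eq_zero.1 h))
  exact le_of_mul_le_mul_right
    ((hV x hx).trans (le_of_abs_le (abs_dotProduct_mulVec_self_le M x))) hxx

lemma mem_rayleighLowerBounds_of_forall {M : Matrix n n ℝ} {c : ℝ} {k : ℕ}
    (hk : k ≤ Fintype.card n) (h : ∀ x, c * (x ⬝ᵥ x) ≤ x ⬝ᵥ M *ᵥ x) :
    c ∈ rayleighLowerBounds M k := by
  obtain ⟨V, -, hV⟩ := exists_submodule_le_finrank_eq (K := ℝ) (W := (⊤ : Submodule ℝ (n → ℝ)))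
    (k := k) (by simpa using hk)
  exact ⟨V, hV, fun x _ => h x⟩

lemma nonempty_rayleighLowerBounds (M : Matrix n n ℝ) {k : ℕ} (hk : k ≤ Fintype.card n) :
    (rayleighLowerBounds M k).Nonempty :=
  ⟨-‖M‖, mem_rayleighLowerBounds_of_forall hk fun x => by
    simpa only [neg_mul] using neg_le_of_abs_le (abs_dotProduct_mulVec_self_le M x)⟩

lemma mem_rayleighLowerBounds_card_iff [DecidableEq n] {M : Matrix n n ℝ} (hM : M.IsHermitian)
    {c : ℝ} : c ∈ rayleighLowerBounds M (Fintype.card n) ↔ c • 1 ≤ M := by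
  rw [smul_one_le_iff hM]
  refine ⟨?_, mem_rayleighLowerBounds_of_forall le_rfl⟩
  rintro ⟨V, hV, h⟩ y
  have hVtop : V = ⊤ := Submodule.eq_top_of_finrank_eq (by simpa using hV)
  exact h y (hVtop ▸ Submodule.mem_top)

lemma mem_rayleighLowerBounds_isometry_conj [DecidableEq n] {Q : Matrix m n ℝ}
    (hQ : Qᵀ * Q = 1) {S : Matrix n n ℝ} {k : ℕ} {c : ℝ} (hc : c ∈ rayleighLowerBounds S k) :
    c ∈ rayleighLowerBounds (Q * S * Qᵀ) k := by
  obtain ⟨V, hV, h⟩ := hc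
  refine ⟨V.map Q.mulVecLin, ?_, ?_⟩
  · rw [finrank_map_eq_of_injOn (mulVec_injective_of_isometry hQ).injOn, hV]
  · rintro _ ⟨y, hy, rfl⟩
    rw [mulVecLin_apply, dotProduct_mulVec_mul_mul_transpose,
      dotProduct_mulVec_mulVec_of_isometry hQ, transpose_mulVec_mulVec_of_isometry hQ]
    exact h y hy

lemma mem_rayleighLowerBounds_of_isometry_conj [DecidableEq n] {Q : Matrix m n ℝ}
    (hQ : Qᵀ * Q = 1) {S : Matrix n n ℝ} {k : ℕ} {c : ℝ} (hc0 : 0 < c)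
    (hc : c ∈ rayleighLowerBounds (Q * S * Qᵀ) k) : c ∈ rayleighLowerBounds S k := by
  obtain ⟨V, hV, h⟩ := hc
  simp only [dotProduct_mulVec_mul_mul_transpose] at h
  have hinj : Set.InjOn Qᵀ.mulVecLin V := by
    refine LinearMap.injOn_of_disjoint_ker le_rfl (Submodule.disjoint_def.2 fun x hx hker => ?_)
    have hxx := h x hx
    rw [show Qᵀ *ᵥ x = 0 from hker, zero_dotProduct] at hxx
    exact dotProduct_self_eq_zero.1 <|
      le_antisymm (nonpos_of_mul_nonpos_right hxx hc0) (dotProduct_self_nonneg x)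
  refine ⟨V.map Qᵀ.mulVecLin, by rw [finrank_map_eq_of_injOn hinj, hV], ?_⟩
  rintro _ ⟨x, hx, rfl⟩
  exact (mul_le_mul_of_nonneg_left (dotProduct_transpose_mulVec_self_le hQ x) hc0.le).trans
    (h x hx)

lemma rayleighLowerBounds_isometry_conj [DecidableEq n] {Q : Matrix m n ℝ} (hQ : Qᵀ * Q = 1)
    {S : Matrix n n ℝ} (hS : S.PosSemidef) {k : ℕ} (hk : k ≤ Fintype.card n) :
    rayleighLowerBounds (Q * S * Qᵀ) k = rayleighLowerBounds S k := by
  ext c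
  refine ⟨fun hc => ?_, mem_rayleighLowerBounds_isometry_conj hQ⟩
  rcases le_or_gt c 0 with hc0 | hc0
  · refine mem_rayleighLowerBounds_of_forall hk fun y => ?_
    have hSy : 0 ≤ y ⬝ᵥ S *ᵥ y := by
      simpa only [star_trivial] using hS.dotProduct_mulVec_nonneg y
    exact (mul_nonpos_of_nonpos_of_nonneg hc0 (dotProduct_self_nonneg y)).trans hSy
  · exact mem_rayleighLowerBounds_of_isometry_conj hQ hc0 hc

end RayleighLowerBounds

section KthEig

open scoped MatrixOrder

variable {m n : ℕ}

lemma kthEig_le_kthEig (M : Matrix (Fin n) (Fin n) ℝ) {k l : ℕ} (hk : 0 < k) (hkl : k ≤ l)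
    (hl : l ≤ n) : kthEig M l ≤ kthEig M k := by
  rw [kthEig_eq_sSup_rayleighLowerBounds, kthEig_eq_sSup_rayleighLowerBounds]
  exact csSup_le_csSup (bddAbove_rayleighLowerBounds M hk)
    (nonempty_rayleighLowerBounds M (by simpa using hl)) (rayleighLowerBounds_anti M hkl)

lemma kthEig_isometry_conj {Q : Matrix (Fin m) (Fin n) ℝ} (hQ : Qᵀ * Q = 1)
    {S : Matrix (Fin n) (Fin n) ℝ} (hS : S.PosSemidef) {k : ℕ} (hk : k ≤ n) :
    kthEig (Q * S * Qᵀ) k = kthEig S k := by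
  rw [kthEig_eq_sSup_rayleighLowerBounds, kthEig_eq_sSup_rayleighLowerBounds,
    rayleighLowerBounds_isometry_conj hQ hS (by simpa using hk)]

lemma le_kthEig_of_smul_one_le {M : Matrix (Fin n) (Fin n) ℝ} (hM : M.IsHermitian) (hn : 0 < n)
    {c : ℝ} (hc : c • 1 ≤ M) : c ≤ kthEig M n := by
  rw [kthEig_eq_sSup_rayleighLowerBounds]
  refine le_csSup (bddAbove_rayleighLowerBounds M hn) ?_
  simpa only [Fintype.card_fin] using (mem_rayleighLowerBounds_card_iff hM).2 hc

lemma kthEig_smul_one_le {M : Matrix (Fin n) (Fin n) ℝ} (hM : M.IsHermitian) :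
    kthEig M n • 1 ≤ M := by
  rw [smul_one_le_iff hM]
  intro y
  rcases (dotProduct_self_nonneg y).eq_or_lt with hy | hy
  · rw [dotProduct_self_eq_zero.1 hy.symm]
    simp
  rw [← le_div_iff₀ hy, kthEig_eq_sSup_rayleighLowerBounds]
  refine csSup_le (nonempty_rayleighLowerBounds M (by simp)) fun c hc => ?_
  have hcM : c • 1 ≤ M :=
    (mem_rayleighLowerBounds_card_iff hM).1 (by simpa only [Fintype.card_fin] using hc)
  exact (le_div_iff₀ hy).2 ((smul_one_le_iff hM).1 hcM y)

lemma kthEig_pos_of_posDef {S : Matrix (Fin n) (Fin n) ℝ} (hS : S.PosDef) (hn : 0 < n) :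
    0 < kthEig S n := by
  obtain ⟨c, hc, hcS⟩ := exists_pos_smul_one_le hS
  exact hc.trans_le (le_kthEig_of_smul_one_le hS.isHermitian hn hcS)

lemma kthEig_sq_le_mul {S : Matrix (Fin n) (Fin n) ℝ} (hS : S.PosSemidef) (hn : 0 < n) :
    kthEig S n ^ 2 ≤ kthEig S 1 * kthEig S n := by
  have hnonneg : 0 ≤ kthEig S n :=
    le_kthEig_of_smul_one_le hS.isHermitian hn (by simpa only [zero_smul] using hS.nonneg)
  rw [sq]
  exact mul_le_mul_of_nonneg_right (kthEig_le_kthEig S one_pos hn le_rfl) hnonneg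

end KthEig

theorem stmt_3_general {m r : ℕ} (hr : 0 < r) {A : Matrix (Fin m) (Fin m) ℝ}
    {Q : Matrix (Fin m) (Fin r) ℝ} (hQ : Qᵀ * Q = 1) {S : Matrix (Fin r) (Fin r) ℝ}
    (hS : S.PosDef) (hA : A = Q * S * Qᵀ) {Ω : Matrix (Fin m) (Fin r) ℝ}
    {X : ℕ → Matrix (Fin m) (Fin r) ℝ} (hX0 : X 0 = A * Ω)
    (hrec : ∀ t, X (t + 1) = scaledGDStep (1 / 2) A (X t)) {δ : ℝ}
    (hδ : δ ≤ 4 / 3 * kthEig A r) (hinit : frobNorm (X 0 * (X 0)ᵀ - A) ≤ δ / 2) (t : ℕ) :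
    frobNorm (X t * (X t)ᵀ - A) ≤ δ / 2 ^ 2 ^ t := by
  obtain ⟨Φ, hΦ⟩ : ∃ Φ, X 0 = Q * Φ := ⟨S * Qᵀ * Ω, by simp only [hX0, hA, Matrix.mul_assoc]⟩
  have hX (t : ℕ) : X t = (scaledGDStep (1 / 2) A)^[t] (Q * Φ) := by
    induction t with
    | zero => exact hΦ
    | succ t ih => rw [hrec, ih, Function.iterate_succ_apply']
  rw [hA, kthEig_isometry_conj hQ hS.posSemidef le_rfl] at hδ
  rw [hΦ, hA, frobNorm_isometry_mul_residual hQ] at hinit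
  rw [hX, hA, scaledGDStep_iterate_isometry_mul hQ, frobNorm_isometry_mul_residual hQ]
  have hSsymm : Sᵀ = S := by
    rw [← conjTranspose_eq_transpose_of_trivial, hS.isHermitian.eq]
  exact norm_scaledGDStep_half_iterate_sub_le hSsymm (kthEig_pos_of_posDef hS hr)
    (kthEig_smul_one_le hS.isHermitian) hδ hinit t

/-- Phase 2 (quadratic convergence) for ScaledGD with step size `η = 1/2` on symmetric
exact-parametrized matrix factorization: if `σ_1(A) = 1`, `κ = 1/σ_r(A)`,
`σ_r(X_0X_0ᵀ) ≥ σ_r(A)/3` and `‖X_0X_0ᵀ − A‖_F ≤ 2/(3κ²)`, then for all `t ≥ 0`,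
`‖X_{t+1}X_{t+1}ᵀ − A‖_F ≤ (4/(3κ²)) ⬝ 2^{−2^{t+1}}`. -/
theorem stmt_3
    (m r : ℕ) (hr : 0 < r)
    (A : Matrix (Fin m) (Fin m) ℝ)
    (Q : Matrix (Fin m) (Fin r) ℝ) (d : Fin r → ℝ)
    (hQ : Qᵀ * Q = 1)
    (hd : ∀ i, 0 < d i)
    (hdmono : ∀ i j : Fin r, i ≤ j → d j ≤ d i)
    (hA : A = Q * Matrix.diagonal d * Qᵀ)
    (hσ1 : kthEig A 1 = 1)
    (κ : ℝ) (hκ : κ = 1 / kthEig A r)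
    (Ω : Matrix (Fin m) (Fin r) ℝ)
    (X : ℕ → Matrix (Fin m) (Fin r) ℝ)
    (hX0 : X 0 = A * Ω)
    (hrank : (X 0).rank = r)
    (hrec : ∀ t : ℕ,
      X (t + 1) = X t - (1 / 2 : ℝ) • ((X t * (X t)ᵀ - A) * X t * ((X t)ᵀ * X t)⁻¹))
    (hinit1 : kthEig A r / 3 ≤ kthEig (X 0 * (X 0)ᵀ) r)
    (hinit2 : frobNorm (X 0 * (X 0)ᵀ - A) ≤ 2 / (3 * κ ^ 2)) :
    ∀ t : ℕ,
      frobNorm (X (t + 1) * (X (t + 1))ᵀ - A)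
        ≤ 4 / (3 * κ ^ 2) * (1 / 2 ^ 2 ^ (t + 1)) := by
  intro t
  have hD : (diagonal d).PosDef := .diagonal hd
  have hσ : kthEig A r ^ 2 ≤ kthEig A r := by
    have h := kthEig_sq_le_mul hD.posSemidef hr
    rwa [← kthEig_isometry_conj hQ hD.posSemidef le_rfl,
      ← kthEig_isometry_conj hQ hD.posSemidef hr, ← hA, hσ1, one_mul] at h
  have hδ : 4 / (3 * κ ^ 2) ≤ 4 / 3 * kthEig A r := by
    calc 4 / (3 * κ ^ 2) = 4 / 3 * kthEig A r ^ 2 := by rw [hκ]; field_simp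
      _ ≤ 4 / 3 * kthEig A r := by gcongr
  rw [mul_one_div]
  exact stmt_3_general hr hQ hD hA hX0 hrec hδ (hinit2.trans_eq (by ring)) (t + 1)
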